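/- arXiv:2104.13905 — 2 statements merged into one kernel-verified Lean document; each statement's English description precedes it below -/
import Mathlib

section
/- For every 1 ≤ Ψ < λ one has P_{c,Ψ} < P_{c,Ψ+1} and P_{e,Ψ} < P_{e,Ψ+1}; for every Ψ ≥ λ one has P_{c,Ψ} = P_{c,λ} and P_{e,Ψ} = P_{e,λ}; and P_{c,λ} + P_{e,λ} = 1. -/
open MeasureTheory ProbabilityTheory
open scoped BigOperators Classical ENNReal

/-- The Euclidean norm on `Fin n → ℝ`. -/
noncomputable def eucNorm {n : ℕ} (v : Fin n → ℝ) : ℝ :=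
  Real.sqrt (∑ i, v i ^ 2)

/-- The BPSK modulation map: `c ∈ F₂ⁿ` is sent to the point of `ℝⁿ`
with coordinates `A(1 - 2 cᵢ)`. -/
noncomputable def bpsk (n : ℕ) (A : ℝ) (c : Fin n → ZMod 2) : Fin n → ℝ :=
  fun i => A * (1 - 2 * ((c i).val : ℝ))

/-- The set of points equidistant from two distinct higher-rate BPSK points. -/
def ambigSet (n : ℕ) (A : ℝ) (Ch : Set (Fin n → ZMod 2)) : Set (Fin n → ℝ) :=
  {y | ∃ c₁ ∈ Ch, ∃ c₂ ∈ Ch, c₁ ≠ c₂ ∧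
    eucNorm (y - bpsk n A c₁) = eucNorm (y - bpsk n A c₂)}

/-- The order-`s` decoding region `Z_s(c)`. -/
def Zreg (n : ℕ) (A : ℝ) (Ch Cl : Set (Fin n → ZMod 2)) (s : ℕ)
    (c : Fin n → ZMod 2) : Set (Fin n → ℝ) :=
  {y | y ∉ ambigSet n A Ch ∧ ∃ T : Finset (Fin n → ZMod 2),
    T.card = s - 1 ∧ (↑T : Set (Fin n → ZMod 2)) ⊆ Ch \ Cl ∧
    (∀ c' ∈ T, eucNorm (y - bpsk n A c') < eucNorm (y - bpsk n A c)) ∧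
    ∀ c' ∈ Ch, c' ≠ c → c' ∉ T →
      eucNorm (y - bpsk n A c) < eucNorm (y - bpsk n A c')}

/-- The standard Gaussian measure on `ℝⁿ` (n i.i.d. N(0,1) coordinates). -/
noncomputable def gaussPi (n : ℕ) : Measure (Fin n → ℝ) :=
  Measure.pi fun _ => gaussianReal 0 1

namespace BpskAux

open Filter Topology

/-- Squared Euclidean distance from `y` to the modulated codeword. -/
noncomputable def dd {n : ℕ} (A : ℝ) (y : Fin n → ℝ) (c : Fin n → ZMod 2) : ℝ :=
  ∑ i, (y i - bpsk n A c i) ^ 2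

lemma lt_iff {n : ℕ} (A : ℝ) (y : Fin n → ℝ) (c c' : Fin n → ZMod 2) :
    eucNorm (y - bpsk n A c) < eucNorm (y - bpsk n A c') ↔ dd A y c < dd A y c' := by
  unfold eucNorm dd
  rw [Real.sqrt_lt_sqrt_iff (Finset.sum_nonneg fun i _ => sq_nonneg _)]
  rfl

lemma eq_iff {n : ℕ} (A : ℝ) (y : Fin n → ℝ) (c c' : Fin n → ZMod 2) :
    eucNorm (y - bpsk n A c) = eucNorm (y - bpsk n A c') ↔ dd A y c = dd A y c' := by
  unfold eucNorm dd
  rw [Real.sqrt_inj (Finset.sum_nonneg fun i _ => sq_nonneg _)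
    (Finset.sum_nonneg fun i _ => sq_nonneg _)]
  rfl

lemma continuous_dd {n : ℕ} (A : ℝ) (c : Fin n → ZMod 2) :
    Continuous fun y : Fin n → ℝ => dd A y c := by
  unfold dd; fun_prop

/-- The decoding region without the removal of ambiguous points. -/
def W (n : ℕ) (A : ℝ) (Ch Cl : Set (Fin n → ZMod 2)) (j : ℕ)
    (c : Fin n → ZMod 2) : Set (Fin n → ℝ) :=
  {y | ∃ T : Finset (Fin n → ZMod 2),
    T.card = j ∧ (↑T : Set (Fin n → ZMod 2)) ⊆ Ch \ Cl ∧
    (∀ c' ∈ T, dd A y c' < dd A y c) ∧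
    ∀ c' ∈ Ch, c' ≠ c → c' ∉ T → dd A y c < dd A y c'}

lemma Zreg_eq (n : ℕ) (A : ℝ) (Ch Cl : Set (Fin n → ZMod 2)) (s : ℕ)
    (c : Fin n → ZMod 2) :
    Zreg n A Ch Cl s c = W n A Ch Cl (s - 1) c \ ambigSet n A Ch := by
  ext y
  simp only [Zreg, W, lt_iff, Set.mem_sdiff, Set.mem_ofPred_eq]
  exact and_comm

lemma isOpen_W (n : ℕ) (A : ℝ) (Ch Cl : Set (Fin n → ZMod 2)) (j : ℕ)
    (c : Fin n → ZMod 2) : IsOpen (W n A Ch Cl j c) := by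
  have : W n A Ch Cl j c = ⋃ T : Finset (Fin n → ZMod 2),
      ⋃ (_ : T.card = j ∧ (↑T : Set (Fin n → ZMod 2)) ⊆ Ch \ Cl),
      ((⋂ c' ∈ (↑T : Set (Fin n → ZMod 2)), {y | dd A y c' < dd A y c}) ∩
        ⋂ c' ∈ {c' | c' ∈ Ch ∧ c' ≠ c ∧ c' ∉ T}, {y | dd A y c < dd A y c'}) := by
    ext y
    simp only [W, Set.mem_ofPred_eq, Set.mem_iUnion, Set.mem_inter_iff, Set.mem_iInter,
      Finset.mem_coe]
    constructor
    · rintro ⟨T, h1, h2, h3, h4⟩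
      exact ⟨T, ⟨h1, h2⟩, h3, fun c' h => h4 c' h.1 h.2.1 h.2.2⟩
    · rintro ⟨T, ⟨h1, h2⟩, h3, h4⟩
      exact ⟨T, h1, h2, h3, fun c' a b d => h4 c' ⟨a, b, d⟩⟩
  rw [this]
  refine isOpen_iUnion fun T => isOpen_iUnion fun _ => IsOpen.inter ?_ ?_
  · exact (Set.toFinite _).isOpen_biInter fun c' _ =>
      isOpen_lt (continuous_dd A c') (continuous_dd A c)
  · exact (Set.toFinite _).isOpen_biInter fun c' _ =>
      isOpen_lt (continuous_dd A c) (continuous_dd A c')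

lemma isClosed_ambig (n : ℕ) (A : ℝ) (Ch : Set (Fin n → ZMod 2)) :
    IsClosed (ambigSet n A Ch) := by
  have : ambigSet n A Ch = ⋃ p ∈ {p : (Fin n → ZMod 2) × (Fin n → ZMod 2) |
      p.1 ∈ Ch ∧ p.2 ∈ Ch ∧ p.1 ≠ p.2}, {y | dd A y p.1 = dd A y p.2} := by
    ext y
    simp only [ambigSet, eq_iff, Set.mem_ofPred_eq, Set.mem_iUnion]
    constructor
    · rintro ⟨a, ha, b, hb, h, h'⟩
      exact ⟨(a, b), ⟨ha, hb, h⟩, h'⟩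
    · rintro ⟨p, ⟨ha, hb, h⟩, h'⟩
      exact ⟨p.1, ha, p.2, hb, h, h'⟩
  rw [this]
  exact (Set.toFinite _).isClosed_biUnion fun p _ =>
    isClosed_eq (continuous_dd A p.1) (continuous_dd A p.2)

lemma bpsk_inj {n : ℕ} {A : ℝ} (hA : 0 < A) {c c' : Fin n → ZMod 2}
    (h : bpsk n A c = bpsk n A c') : c = c' := by
  funext i
  have := congrFun h i
  simp only [bpsk] at this
  have h2 := mul_left_cancel₀ hA.ne' this
  have h3 : ((c i).val : ℝ) = ((c' i).val : ℝ) := by linarith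
  exact ZMod.val_injective 2 (by exact_mod_cast h3)

/-- Affine hyperplanes are null. -/
def HypNull {n : ℕ} (μ : Measure (Fin n → ℝ)) : Prop :=
  ∀ (a : Fin n → ℝ) (b : ℝ), a ≠ 0 → μ {y | ∑ i, a i * y i = b} = 0

lemma ambig_null {n : ℕ} {A : ℝ} (hA : 0 < A) (μ : Measure (Fin n → ℝ)) (hμ : HypNull μ)
    (Ch : Set (Fin n → ZMod 2)) : μ (ambigSet n A Ch) = 0 := by
  have : ambigSet n A Ch ⊆ ⋃ p : {p : (Fin n → ZMod 2) × (Fin n → ZMod 2) // p.1 ≠ p.2},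
      {y | ∑ i, (bpsk n A p.1.1 - bpsk n A p.1.2) i * y i =
        ∑ i, ((bpsk n A p.1.1 i) ^ 2 - (bpsk n A p.1.2 i) ^ 2) / 2} := by
    rintro y ⟨a, ha, b, hb, h, h'⟩
    rw [eq_iff] at h'
    refine Set.mem_iUnion.2 ⟨⟨(a, b), h⟩, ?_⟩
    unfold dd at h'
    rw [← sub_eq_zero, ← Finset.sum_sub_distrib] at h'
    simp only [Set.mem_ofPred_eq, Pi.sub_apply]
    rw [← sub_eq_zero, ← Finset.sum_sub_distrib]
    rw [← neg_eq_zero, ← mul_eq_zero_iff_left (two_ne_zero : (2 : ℝ) ≠ 0), ← h',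
      ← Finset.sum_neg_distrib, Finset.mul_sum]
    refine Finset.sum_congr rfl fun i _ => ?_
    ring
  refine measure_mono_null this (measure_iUnion_null fun p => hμ _ _ ?_)
  intro h
  exact p.2 (bpsk_inj hA (sub_eq_zero.1 h))

/-- squared distance between modulated codewords -/
noncomputable def ee {n : ℕ} (A : ℝ) (c c' : Fin n → ZMod 2) : ℝ :=
  ∑ i, (bpsk n A c' i - bpsk n A c i) ^ 2

noncomputable def qq {n : ℕ} (A : ℝ) (c : Fin n → ZMod 2) (y : Fin n → ℝ)
    (c' : Fin n → ZMod 2) : ℝ :=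
  (∑ i, (y i - bpsk n A c i) * (bpsk n A c' i - bpsk n A c i)) / ee A c c'

lemma ee_pos {n : ℕ} {A : ℝ} (hA : 0 < A) {c c' : Fin n → ZMod 2} (h : c' ≠ c) :
    0 < ee A c c' := by
  obtain ⟨i, hi⟩ := Function.ne_iff.1 (fun h' => h (bpsk_inj hA h'))
  exact Finset.sum_pos' (fun i _ => sq_nonneg _)
    ⟨i, Finset.mem_univ _, pow_pos_of_ne (sub_ne_zero.2 hi)⟩
where
  pow_pos_of_ne {x : ℝ} (hx : x ≠ 0) : 0 < x ^ 2 := by positivity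

lemma dd_diff {n : ℕ} {A : ℝ} (hA : 0 < A) {c c' : Fin n → ZMod 2} (h : c' ≠ c)
    (y : Fin n → ℝ) : dd A y c' - dd A y c = ee A c c' * (1 - 2 * qq A c y c') := by
  have h1 : ee A c c' * (1 - 2 * qq A c y c') = ee A c c' -
      2 * (∑ i, (y i - bpsk n A c i) * (bpsk n A c' i - bpsk n A c i)) := by
    unfold qq
    have := (ee_pos hA h).ne'
    field_simp
  rw [h1]
  unfold dd ee
  rw [Finset.mul_sum, ← Finset.sum_sub_distrib, ← Finset.sum_sub_distrib]
  exact Finset.sum_congr rfl fun i _ => by ring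

lemma closer_iff {n : ℕ} {A : ℝ} (hA : 0 < A) {c c' : Fin n → ZMod 2} (h : c' ≠ c)
    (y : Fin n → ℝ) : dd A y c' < dd A y c ↔ 1 / 2 < qq A c y c' := by
  have h1 := dd_diff hA h y
  have h2 := ee_pos hA h
  constructor
  · intro h3
    by_contra h4
    have : 0 ≤ ee A c c' * (1 - 2 * qq A c y c') := mul_nonneg h2.le (by linarith)
    linarith
  · intro h3
    have : ee A c c' * (1 - 2 * qq A c y c') < 0 := mul_neg_of_pos_of_neg h2 (by linarith)
    linarith

lemma farther_iff {n : ℕ} {A : ℝ} (hA : 0 < A) {c c' : Fin n → ZMod 2} (h : c' ≠ c)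
    (y : Fin n → ℝ) : dd A y c < dd A y c' ↔ qq A c y c' < 1 / 2 := by
  have h1 := dd_diff hA h y
  have h2 := ee_pos hA h
  constructor
  · intro h3
    by_contra h4
    have : ee A c c' * (1 - 2 * qq A c y c') ≤ 0 :=
      mul_nonpos_of_nonneg_of_nonpos h2.le (by linarith)
    linarith
  · intro h3
    have : 0 < ee A c c' * (1 - 2 * qq A c y c') := mul_pos h2 (by linarith)
    linarith

lemma qq_scale {n : ℕ} (A : ℝ) (c c' : Fin n → ZMod 2) (y : Fin n → ℝ) (u : ℝ) :
    qq A c (fun i => bpsk n A c i + u * (y i - bpsk n A c i)) c' = u * qq A c y c' := by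
  unfold qq
  rw [← mul_div_assoc, Finset.mul_sum]
  congr 1
  exact Finset.sum_congr rfl fun i _ => by ring

lemma qq_generic {n : ℕ} {A : ℝ} (hA : 0 < A) (μ : Measure (Fin n → ℝ)) (hμ : HypNull μ)
    (c : Fin n → ZMod 2) :
    ∀ᵐ y ∂μ, ∀ c₁ c₂, c₁ ≠ c → c₂ ≠ c → c₁ ≠ c₂ → qq A c y c₁ ≠ qq A c y c₂ := by
  rw [ae_all_iff]; intro c₁
  rw [ae_all_iff]; intro c₂
  by_cases h1 : c₁ = c
  · exact Eventually.of_forall fun y h => absurd h1 h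
  by_cases h2 : c₂ = c
  · exact Eventually.of_forall fun y _ h => absurd h2 h
  by_cases h3 : c₁ = c₂
  · exact Eventually.of_forall fun y _ _ h => absurd h3 h
  have e1 := ee_pos hA h1
  have e2 := ee_pos hA h2
  let a : Fin n → ℝ := fun i => (bpsk n A c₁ i - bpsk n A c i) / ee A c c₁ -
    (bpsk n A c₂ i - bpsk n A c i) / ee A c c₂
  have ha : a ≠ 0 := by
    intro h
    have h' : ∀ i, (bpsk n A c₁ i - bpsk n A c i) / ee A c c₁ =
        (bpsk n A c₂ i - bpsk n A c i) / ee A c c₂ := fun i => sub_eq_zero.1 (congrFun h i)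
    have key : ∀ c', ee A c c' ≠ 0 →
        ∑ i, ((bpsk n A c' i - bpsk n A c i) / ee A c c') ^ 2 = 1 / ee A c c' := by
      intro c' hc'
      simp_rw [div_pow]
      rw [← Finset.sum_div]
      change ee A c c' / _ = _
      field_simp
    have k1 := key c₁ e1.ne'
    have k2 := key c₂ e2.ne'
    simp_rw [h'] at k1
    rw [k1] at k2
    have k3 : ee A c c₁ = ee A c c₂ := by
      have := congrArg (fun x => 1 / x) k2
      simpa using this
    apply h3
    apply bpsk_inj hA
    funext i
    have := h' i
    rw [k3] at this
    have := (div_left_inj' e2.ne').1 this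
    linarith
  have := hμ a (∑ i, a i * bpsk n A c i) ha
  refine measure_mono_null ?_ this
  intro y hy
  simp only [Set.mem_compl_iff, Set.mem_ofPred_eq, not_forall, not_not] at hy
  obtain ⟨_, _, _, h⟩ := hy
  simp only [Set.mem_ofPred_eq]
  rw [← sub_eq_zero, ← Finset.sum_sub_distrib]
  unfold qq at h
  rw [← sub_eq_zero, Finset.sum_div, Finset.sum_div, ← Finset.sum_sub_distrib] at h
  rw [← h]
  exact Finset.sum_congr rfl fun i _ => by simp only [a]; ring

lemma nonempty_generic {n : ℕ} (μ : Measure (Fin n → ℝ)) [μ.IsOpenPosMeasure]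
    {U : Set (Fin n → ℝ)} (hU : IsOpen U) (hne : U.Nonempty) {p : (Fin n → ℝ) → Prop}
    (hp : ∀ᵐ y ∂μ, p y) : ∃ y ∈ U, p y := by
  by_contra h
  push Not at h
  have : μ U = 0 := measure_mono_null (fun y hy => h y hy) hp
  exact (hU.measure_pos μ hne).ne' this

lemma W_step {n : ℕ} {A : ℝ} (hA : 0 < A) (μ : Measure (Fin n → ℝ)) [μ.IsOpenPosMeasure]
    (hμ : HypNull μ) (Ch Cl : Set (Fin n → ZMod 2)) (c : Fin n → ZMod 2) (hc : c ∈ Cl) (j : ℕ)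
    (h : (W n A Ch Cl (j + 1) c).Nonempty) : (W n A Ch Cl j c).Nonempty := by
  obtain ⟨y, ⟨T, hT1, hT2, hT3, hT4⟩, hgen⟩ :=
    nonempty_generic μ (isOpen_W n A Ch Cl (j + 1) c) h (qq_generic hA μ hμ c)
  have hTne : ∀ c' ∈ T, c' ≠ c := by
    rintro c' h' rfl
    exact (hT2 h').2 hc
  have hTn : T.Nonempty := Finset.card_pos.1 (by omega)
  obtain ⟨c0, hc0, hmin⟩ := T.exists_min_image (qq A c y) hTn
  have hq0 := (closer_iff hA (hTne c0 hc0) y).1 (hT3 c0 hc0)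
  have hlt : ∀ c' ∈ T.erase c0, qq A c y c0 < qq A c y c' := by
    intro c' h'
    have h2 := Finset.mem_of_mem_erase h'
    exact lt_of_le_of_ne (hmin c' h2)
      (hgen _ _ (hTne c0 hc0) (hTne c' h2) (Finset.ne_of_mem_erase h').symm)
  have hev : ∀ᶠ θ in 𝓝[>] (qq A c y c0), qq A c y c0 < θ ∧
      ∀ c' ∈ T.erase c0, θ < qq A c y c' := by
    refine eventually_mem_nhdsWithin.and ?_
    rw [Filter.eventually_all_finset]
    intro c' h'
    exact (eventually_lt_nhds (hlt c' h')).filter_mono nhdsWithin_le_nhds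
  obtain ⟨θ, hθ0, hθ⟩ := hev.exists
  have hθp : 0 < θ := by linarith
  have e1 : ∀ x : ℝ, 1 / 2 < 1 / (2 * θ) * x ↔ θ < x := by
    intro x
    rw [one_div_mul_eq_div, div_lt_div_iff₀ (by norm_num) (by positivity)]
    constructor <;> intro h <;> linarith
  have e2 : ∀ x : ℝ, 1 / (2 * θ) * x < 1 / 2 ↔ x < θ := by
    intro x
    rw [one_div_mul_eq_div, div_lt_div_iff₀ (by positivity) (by norm_num)]
    constructor <;> intro h <;> linarith
  refine ⟨fun i => bpsk n A c i + 1 / (2 * θ) * (y i - bpsk n A c i), T.erase c0, ?_, ?_, ?_, ?_⟩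
  · rw [Finset.card_erase_of_mem hc0]; omega
  · exact fun x hx => hT2 (Finset.mem_of_mem_erase (Finset.mem_coe.1 hx))
  · intro c' h'
    rw [closer_iff hA (hTne c' (Finset.mem_of_mem_erase h')), qq_scale, e1]
    exact hθ c' h'
  · intro c' h1 h2 h3
    rw [farther_iff hA h2, qq_scale, e2]
    by_cases h4 : c' = c0
    · rw [h4]; exact hθ0
    · have := (farther_iff hA h2 y).1 (hT4 c' h1 h2 fun h5 => h3 (Finset.mem_erase.2 ⟨h4, h5⟩))
      linarith

lemma W_le {n : ℕ} {A : ℝ} (hA : 0 < A) (μ : Measure (Fin n → ℝ)) [μ.IsOpenPosMeasure]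
    (hμ : HypNull μ) (Ch Cl : Set (Fin n → ZMod 2)) (c : Fin n → ZMod 2) (hc : c ∈ Cl) (j l : ℕ)
    (hjl : j ≤ l) (h : (W n A Ch Cl l c).Nonempty) : (W n A Ch Cl j c).Nonempty := by
  induction l, hjl using Nat.le_induction with
  | base => exact h
  | succ l _ ih => exact ih (W_step hA μ hμ Ch Cl c hc l h)

lemma Zreg_pos {n : ℕ} {A : ℝ} (hA : 0 < A) (μ : Measure (Fin n → ℝ)) [μ.IsOpenPosMeasure]
    (hμ : HypNull μ) (Ch Cl : Set (Fin n → ZMod 2)) (c : Fin n → ZMod 2) (hc : c ∈ Cl) (s l : ℕ)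
    (hsl : s ≤ l) (h : (Zreg n A Ch Cl l c).Nonempty) : 0 < μ (Zreg n A Ch Cl s c) := by
  rw [Zreg_eq] at h ⊢
  rw [measure_sdiff_null (ambig_null hA μ hμ Ch)]
  exact (isOpen_W _ _ _ _ _ _).measure_pos μ
    (W_le hA μ hμ Ch Cl c hc _ (l - 1) (by omega) (h.mono Set.sdiff_subset))

lemma sign_add (a b : ZMod 2) : (1 - 2 * ((a + b).val : ℝ)) =
    (1 - 2 * (a.val : ℝ)) * (1 - 2 * (b.val : ℝ)) := by
  have h : ∀ a b : ZMod 2, (1 - 2 * ((a + b).val : ℤ)) =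
    (1 - 2 * (a.val : ℤ)) * (1 - 2 * (b.val : ℤ)) := by decide
  exact_mod_cast h a b

lemma sign_sq (a : ZMod 2) : (1 - 2 * (a.val : ℝ)) ^ 2 = 1 := by
  have h : ∀ a : ZMod 2, (1 - 2 * (a.val : ℤ)) ^ 2 = 1 := by decide
  exact_mod_cast h a

lemma dd_flip {n : ℕ} (A : ℝ) (y : Fin n → ℝ) (c e : Fin n → ZMod 2) :
    dd A (fun i => (1 - 2 * ((e i).val : ℝ)) * y i) (c + e) = dd A y c := by
  unfold dd
  refine Finset.sum_congr rfl fun i _ => ?_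
  have h1 : bpsk n A (c + e) i = (1 - 2 * ((e i).val : ℝ)) * bpsk n A c i := by
    simp only [bpsk, Pi.add_apply, sign_add]; ring
  rw [h1, ← mul_sub, mul_pow, sign_sq, one_mul]

lemma add_self_zero {n : ℕ} (e : Fin n → ZMod 2) : e + e = 0 := by
  funext i
  exact CharTwo.add_self_eq_zero (e i)

lemma dd_flip' {n : ℕ} (A : ℝ) (y : Fin n → ℝ) (c e : Fin n → ZMod 2) :
    dd A (fun i => (1 - 2 * ((e i).val : ℝ)) * y i) c = dd A y (c + e) := by
  rw [← dd_flip A y (c + e) e, add_assoc, add_self_zero, add_zero]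

lemma Zreg_symm {n : ℕ} {A : ℝ} (Ch Cl : Submodule (ZMod 2) (Fin n → ZMod 2))
    (hsub : Cl ≤ Ch) (s : ℕ) (c c' : Fin n → ZMod 2) (hc : c ∈ Cl) (hc' : c' ∈ Cl)
    (h : (Zreg n A ↑Ch ↑Cl s c).Nonempty) : (Zreg n A ↑Ch ↑Cl s c').Nonempty := by
  obtain ⟨y, hy, T, hT1, hT2, hT3, hT4⟩ := h
  let e := c + c'
  have he : e ∈ Cl := Cl.add_mem hc hc'
  have heh : e ∈ Ch := hsub he
  have hee : ∀ x : Fin n → ZMod 2, x + e + e = x := fun x => by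
    rw [add_assoc, add_self_zero, add_zero]
  have hce : c' + e = c := by
    simp only [e]; rw [add_comm c c', ← add_assoc, add_self_zero, zero_add]
  simp only [lt_iff] at hT3 hT4
  have hmem : ∀ x, x ∈ T.image (· + e) ↔ x + e ∈ T := by
    intro x
    rw [Finset.mem_image]
    constructor
    · rintro ⟨z, hz, rfl⟩
      rw [hee]; exact hz
    · intro hx
      exact ⟨x + e, hx, hee x⟩
  refine ⟨fun i => (1 - 2 * ((e i).val : ℝ)) * y i, ?_, T.image (· + e), ?_, ?_, ?_, ?_⟩
  · rintro ⟨a, ha, b, hb, hab, h⟩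
    rw [eq_iff, dd_flip', dd_flip'] at h
    exact hy ⟨a + e, Ch.add_mem ha heh, b + e, Ch.add_mem hb heh,
      fun h' => hab (add_right_cancel h'), (eq_iff _ _ _ _).2 h⟩
  · rw [Finset.card_image_of_injective _ (add_left_injective e), hT1]
  · intro x hx
    have hx' := hT2 ((hmem x).1 hx)
    refine ⟨?_, fun h => hx'.2 (Cl.add_mem h he)⟩
    have := Ch.add_mem hx'.1 heh
    rwa [hee] at this
  · intro x hx
    rw [lt_iff, dd_flip', dd_flip', hce]
    exact hT3 _ ((hmem x).1 hx)
  · intro x hx hne hxT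
    rw [lt_iff, dd_flip', dd_flip', hce]
    refine hT4 _ (Ch.add_mem hx heh) ?_ (fun h => hxT ((hmem x).2 h))
    intro h
    apply hne
    rw [← hce] at h
    exact add_right_cancel h

lemma Zreg_cover {n : ℕ} {A : ℝ} (Ch Cl : Submodule (ZMod 2) (Fin n → ZMod 2))
    (hsub : Cl ≤ Ch) (y : Fin n → ℝ) (hy : y ∉ ambigSet n A (Ch : Set (Fin n → ZMod 2))) :
    ∃ s, 1 ≤ s ∧ ∃ c ∈ Cl, y ∈ Zreg n A ↑Ch ↑Cl s c := by
  obtain ⟨c, hc, hmin⟩ := (Finset.univ.filter (fun c => c ∈ Cl)).exists_min_image (dd A y)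
    ⟨0, by simp⟩
  simp only [Finset.mem_filter, Finset.mem_univ, true_and] at hc hmin
  refine ⟨(Finset.univ.filter (fun x => x ∈ Ch ∧ dd A y x < dd A y c)).card + 1, by omega, c, hc,
    hy, Finset.univ.filter (fun x => x ∈ Ch ∧ dd A y x < dd A y c), by omega, ?_, ?_, ?_⟩
  · intro x hx
    simp only [Finset.coe_filter, Finset.mem_univ, true_and, Set.mem_ofPred_eq] at hx
    exact ⟨hx.1, fun h => absurd (hmin x h) (not_le.2 hx.2)⟩
  · intro x hx
    simp only [Finset.mem_filter, Finset.mem_univ, true_and] at hx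
    rw [lt_iff]; exact hx.2
  · intro x hx hne hxT
    simp only [Finset.mem_filter, Finset.mem_univ, true_and, not_and, not_lt] at hxT
    rw [lt_iff]
    refine lt_of_le_of_ne (hxT hx) fun h => ?_
    exact hy ⟨c, hsub hc, x, hx, hne.symm, (eq_iff _ _ _ _).2 h⟩

lemma Zreg_unique {n : ℕ} {A : ℝ} (Ch Cl : Submodule (ZMod 2) (Fin n → ZMod 2))
    (hsub : Cl ≤ Ch) (y : Fin n → ℝ) (s s' : ℕ) (hs : 1 ≤ s) (hs' : 1 ≤ s')
    (c c' : Fin n → ZMod 2) (hc : c ∈ Cl) (hc' : c' ∈ Cl)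
    (h : y ∈ Zreg n A ↑Ch ↑Cl s c) (h' : y ∈ Zreg n A ↑Ch ↑Cl s' c') : s = s' ∧ c = c' := by
  obtain ⟨-, T, hT1, hT2, hT3, hT4⟩ := h
  obtain ⟨-, T', hT1', hT2', hT3', hT4'⟩ := h'
  have hcc : c = c' := by
    by_contra hne
    have h1 := hT4 c' (hsub hc') (Ne.symm hne) fun h => (hT2 h).2 hc'
    have h2 := hT4' c (hsub hc) hne fun h => (hT2' h).2 hc
    exact lt_asymm h1 h2
  subst hcc
  refine ⟨?_, rfl⟩
  have key : ∀ T T' : Finset (Fin n → ZMod 2),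
      (↑T : Set (Fin n → ZMod 2)) ⊆ (Ch : Set (Fin n → ZMod 2)) \ Cl →
      (∀ c' ∈ T, eucNorm (y - bpsk n A c') < eucNorm (y - bpsk n A c)) →
      (∀ c' ∈ (Ch : Set (Fin n → ZMod 2)), c' ≠ c → c' ∉ T' →
        eucNorm (y - bpsk n A c) < eucNorm (y - bpsk n A c')) → T ⊆ T' := by
    intro T T' h1 h2 h3 x hx
    by_contra hxT
    have h4 := h1 hx
    exact lt_asymm (h2 x hx) (h3 x h4.1 (fun h => h4.2 (h ▸ hc)) hxT)
  have : T = T' := Finset.Subset.antisymm (key T T' hT2 hT3 hT4') (key T' T hT2' hT3' hT4)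
  rw [this] at hT1
  omega

lemma measurable_Zreg (n : ℕ) (A : ℝ) (Ch Cl : Set (Fin n → ZMod 2)) (s : ℕ)
    (c : Fin n → ZMod 2) : MeasurableSet (Zreg n A Ch Cl s c) := by
  rw [Zreg_eq]
  exact (isOpen_W _ _ _ _ _ _).measurableSet.diff (isClosed_ambig _ _ _).measurableSet

lemma gaussPi_hyp (n : ℕ) : HypNull (gaussPi n) := by
  intro a b ha
  obtain ⟨i, hi⟩ := Function.ne_iff.1 ha
  obtain _ | n := n
  · exact i.elim0
  have : NullSingletonClass (gaussianReal 0 1) := nullSingletonClass_gaussianReal one_ne_zero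
  have hmp := measurePreserving_piFinSuccAbove
    (fun _ : Fin (n + 1) => gaussianReal 0 1) i
  have hS : MeasurableSet {p : ℝ × (Fin n → ℝ) | a i * p.1 + ∑ j, a (i.succAbove j) * p.2 j = b} :=
    measurableSet_eq_fun (by fun_prop) (by fun_prop)
  have hpre : {y : Fin (n + 1) → ℝ | ∑ i, a i * y i = b} =
      (MeasurableEquiv.piFinSuccAbove (fun _ => ℝ) i) ⁻¹'
        {p : ℝ × (Fin n → ℝ) | a i * p.1 + ∑ j, a (i.succAbove j) * p.2 j = b} := by
    ext y
    simp only [Set.mem_ofPred_eq, Set.mem_preimage]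
    rw [Fin.sum_univ_succAbove _ i]
    rfl
  unfold gaussPi
  rw [hpre, hmp.measure_preimage hS.nullMeasurableSet, Measure.prod_apply_symm hS]
  rw [lintegral_eq_zero_of_ae_eq_zero]
  refine Eventually.of_forall fun z => ?_
  refine measure_mono_null (t := {(b - ∑ j, a (i.succAbove j) * z j) / a i}) ?_
    (measure_singleton _)
  intro x hx
  simp only [Set.mem_preimage, Set.mem_ofPred_eq] at hx
  rw [Set.mem_singleton_iff, eq_div_iff hi]
  linarith

instance gaussPi_openPos (n : ℕ) : (gaussPi n).IsOpenPosMeasure := by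
  have : (gaussianReal 0 1).IsOpenPosMeasure :=
    (gaussianReal_absolutelyContinuous' 0 one_ne_zero).isOpenPosMeasure
  unfold gaussPi
  infer_instance

instance gaussPi_prob (n : ℕ) : IsProbabilityMeasure (gaussPi n) := by
  unfold gaussPi
  infer_instance

/-- law of the received vector -/
noncomputable def law (n : ℕ) (v : Fin n → ℝ) : Measure (Fin n → ℝ) :=
  (gaussPi n).map (fun z => v + z)

lemma law_apply (n : ℕ) (v : Fin n → ℝ) (S : Set (Fin n → ℝ)) :
    law n v S = gaussPi n ((fun z => v + z) ⁻¹' S) :=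
  (MeasurableEquiv.addLeft v).map_apply S

lemma law_hyp (n : ℕ) (v : Fin n → ℝ) : HypNull (law n v) := by
  intro a b ha
  rw [law_apply]
  convert gaussPi_hyp n a (b - ∑ i, a i * v i) ha using 2
  ext z
  simp only [Set.mem_preimage, Set.mem_ofPred_eq, Pi.add_apply, mul_add, Finset.sum_add_distrib]
  constructor <;> intro h <;> linarith

instance law_openPos (n : ℕ) (v : Fin n → ℝ) : (law n v).IsOpenPosMeasure := by
  constructor
  intro U hU hne
  rw [law_apply]
  refine ((hU.preimage (by fun_prop)).measure_pos _ ?_).ne'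
  obtain ⟨y, hy⟩ := hne
  exact ⟨y - v, by simpa using hy⟩

instance law_prob (n : ℕ) (v : Fin n → ℝ) : IsProbabilityMeasure (law n v) :=
  Measure.isProbabilityMeasure_map (by fun_prop)

end BpskAux

open BpskAux in
theorem stmt6 (k m n : ℕ) (hk : 1 ≤ k) (hm : 1 ≤ m) (hn : k + m ≤ n)
    (A : ℝ) (hA : 0 < A)
    (Ch Cl : Submodule (ZMod 2) (Fin n → ZMod 2)) (hsub : Cl ≤ Ch)
    (hChcard : Nat.card Ch = 2 ^ (k + m)) (hClcard : Nat.card Cl = 2 ^ k)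
    (lam : ℕ)
    (hlam : IsGreatest
      {s : ℕ | 1 ≤ s ∧ ∀ c ∈ Cl, (Zreg n A ↑Ch ↑Cl s c).Nonempty} lam)
    -- the transmitted codeword
    (cbar : Fin n → ZMod 2) (hcbar : cbar ∈ Cl)
    -- probability of correct decoding with constrained maximum list size Ψ
    (Pc : ℕ → ℝ≥0∞)
    (hPc : ∀ Ψ, Pc Ψ = ∑ s ∈ Finset.Icc 1 (min lam Ψ),
      gaussPi n ((fun z => bpsk n A cbar + z) ⁻¹' Zreg n A ↑Ch ↑Cl s cbar))
    -- probability of undetected error with constrained maximum list size Ψ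
    (Pe : ℕ → ℝ≥0∞)
    (hPe : ∀ Ψ, Pe Ψ = ∑ s ∈ Finset.Icc 1 (min lam Ψ),
      ∑ c ∈ Finset.univ.filter (fun c => c ∈ Cl ∧ c ≠ cbar),
        gaussPi n ((fun z => bpsk n A cbar + z) ⁻¹' Zreg n A ↑Ch ↑Cl s c)) :
    (∀ Ψ : ℕ, 1 ≤ Ψ → Ψ < lam → Pc Ψ < Pc (Ψ + 1) ∧ Pe Ψ < Pe (Ψ + 1)) ∧
    (∀ Ψ : ℕ, lam ≤ Ψ → Pc Ψ = Pc lam ∧ Pe Ψ = Pe lam) ∧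
    Pc lam + Pe lam = 1 := by
  simp only [← law_apply] at hPc hPe
  set μ := law n (bpsk n A cbar) with hμdef
  have hμ : HypNull μ := law_hyp n _
  obtain ⟨⟨hlam1, hlamne⟩, hlamub⟩ := hlam
  have hpos : ∀ c ∈ Cl, ∀ s ≤ lam, 0 < μ (Zreg n A ↑Ch ↑Cl s c) := fun c hc s hs =>
    Zreg_pos hA μ hμ Ch Cl c hc s lam hs (hlamne c hc)
  refine ⟨?_, ?_, ?_⟩
  · intro Ψ h1 h2
    have e1 : min lam Ψ = Ψ := by omega
    have e2 : min lam (Ψ + 1) = Ψ + 1 := by omega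
    rw [hPc, hPc, hPe, hPe, e1, e2, Finset.sum_Icc_succ_top (by omega),
      Finset.sum_Icc_succ_top (by omega)]
    constructor
    · refine ENNReal.lt_add_right ?_ (hpos cbar hcbar _ h2).ne'
      exact ENNReal.sum_ne_top.2 fun s _ => measure_ne_top _ _
    · refine ENNReal.lt_add_right ?_ ?_
      · exact ENNReal.sum_ne_top.2 fun s _ => ENNReal.sum_ne_top.2 fun c _ => measure_ne_top _ _
      · have hone : 1 < Nat.card Cl := by
          rw [hClcard]; exact Nat.one_lt_two_pow (by omega)
        have : Nontrivial Cl := (Finite.one_lt_card_iff_nontrivial).1 hone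
        obtain ⟨⟨c, hc⟩, hne⟩ := exists_ne (⟨cbar, hcbar⟩ : Cl)
        have hne' : c ≠ cbar := fun h => hne (Subtype.ext h)
        intro h0
        rw [Finset.sum_eq_zero_iff] at h0
        exact (hpos c hc _ h2).ne' (h0 c (by simp [hc, hne']))
  · intro Ψ h
    rw [hPc, hPc, hPe, hPe, min_self, min_eq_left h]
    exact ⟨rfl, rfl⟩
  · rw [hPc, hPe, min_self, ← Finset.sum_add_distrib]
    have hins : ∀ s, μ (Zreg n A ↑Ch ↑Cl s cbar) +
        ∑ c ∈ Finset.univ.filter (fun c => c ∈ Cl ∧ c ≠ cbar), μ (Zreg n A ↑Ch ↑Cl s c) =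
        ∑ c ∈ Finset.univ.filter (fun c => c ∈ Cl), μ (Zreg n A ↑Ch ↑Cl s c) := by
      intro s
      have : Finset.univ.filter (fun c => c ∈ Cl) =
          insert cbar (Finset.univ.filter (fun c => c ∈ Cl ∧ c ≠ cbar)) := by
        ext c
        simp only [Finset.mem_filter, Finset.mem_univ, true_and, Finset.mem_insert]
        by_cases h : c = cbar
        · simp [h, hcbar]
        · simp [h]
      rw [this, Finset.sum_insert (by simp)]
    simp only [hins]
    rw [← Finset.sum_product', ← measure_biUnion_finset]
    · rw [← prob_compl_eq_zero_iff]
      · refine measure_mono_null ?_ (ambig_null hA μ hμ (Ch : Set (Fin n → ZMod 2)))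
        intro y hy
        by_contra hamb
        obtain ⟨s, hs, c, hc, hZ⟩ := Zreg_cover Ch Cl hsub y hamb
        apply hy
        have hsl : s ≤ lam := hlamub ⟨hs, fun c' hc' =>
          Zreg_symm Ch Cl hsub s c c' hc hc' ⟨y, hZ⟩⟩
        simp only [Set.mem_iUnion]
        exact ⟨(s, c), by simp [hs, hsl, hc], hZ⟩
      · exact Finset.measurableSet_biUnion _ fun p _ => measurable_Zreg _ _ _ _ _ _
    · rintro ⟨s, c⟩ hp ⟨s', c'⟩ hp' hne
      simp only [Finset.coe_product, Set.mem_prod, Finset.mem_coe, Finset.mem_Icc,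
        Finset.mem_filter, Finset.mem_univ, true_and] at hp hp'
      refine Set.disjoint_left.2 fun y hy hy' => hne ?_
      obtain ⟨h1, h2⟩ := Zreg_unique Ch Cl hsub y s s' hp.1.1 hp'.1.1 c c' hp.2 hp'.2 hy hy'
      rw [h1, h2]
    · exact fun p _ => measurable_Zreg _ _ _ _ _ _
end

section
/- For A > 0 and y ∈ ℝⁿ define the terminating list rank L_A(y) = #{ c ∈ C_h : ‖y − x_A(c)‖ ≤ min_{c' ∈ C_l} ‖y − x_A(c')‖ }. Fix a transmitted codeword c̄ ∈ C_l. Then lim_{A → 0⁺} ∫_{ℝⁿ} L_A(x_A(c̄) + z) dγⁿ(z) = ∫_{ℝⁿ} L₁(z) dγⁿ(z); moreover the right-hand side equals ∫_{ℝⁿ} L_A(z) dγⁿ(z) for every A > 0 (the expected list rank when the transmitted point is the origin, which is independent of A). -/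
open MeasureTheory ProbabilityTheory Filter
open scoped BigOperators Topology

/-- The terminating list rank of a received point `y`: the number of
higher-rate codewords whose BPSK point lies within the distance from `y` to
the closest lower-rate BPSK point. -/
noncomputable def listRank (n : ℕ) (Ch Cl : Set (Fin n → ZMod 2)) (A : ℝ)
    (y : Fin n → ℝ) : ℕ :=
  Set.ncard {c | c ∈ Ch ∧ eucNorm (y - bpsk n A c) ≤
    sInf ((fun c' => eucNorm (y - bpsk n A c')) '' Cl)}

/-- Correlation of `y` with the unit-amplitude BPSK point of `c`. -/
noncomputable def corr {n : ℕ} (y : Fin n → ℝ) (c : Fin n → ZMod 2) : ℝ :=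
  ∑ i, y i * bpsk n 1 c i

lemma bpsk_eq (n : ℕ) (A : ℝ) (c : Fin n → ZMod 2) (i : Fin n) :
    bpsk n A c i = A * bpsk n 1 c i := by
  simp [bpsk]

lemma bpsk_one_sq (n : ℕ) (c : Fin n → ZMod 2) (i : Fin n) :
    bpsk n 1 c i ^ 2 = 1 := by
  unfold bpsk
  generalize c i = a
  fin_cases a
  · change (1 * (1 - 2 * (((0 : ℕ)) : ℝ))) ^ 2 = 1
    norm_num
  · change (1 * (1 - 2 * (((1 : ℕ)) : ℝ))) ^ 2 = 1
    norm_num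

lemma bpsk_one_inj (n : ℕ) (c c' : Fin n → ZMod 2)
    (h : ∀ i, bpsk n 1 c i = bpsk n 1 c' i) : c = c' := by
  funext i
  have := h i
  simp only [bpsk] at this
  have h2 : ((c i).val : ℝ) = ((c' i).val : ℝ) := by linarith
  exact ZMod.val_injective 2 (by exact_mod_cast h2)

lemma dist_sq (n : ℕ) (A : ℝ) (y : Fin n → ℝ) (c : Fin n → ZMod 2) :
    ∑ i, (y - bpsk n A c) i ^ 2 = ∑ i, y i ^ 2 + n * A ^ 2 - 2 * A * corr y c := by
  have : ∀ i, (y - bpsk n A c) i ^ 2 = y i ^ 2 + A ^ 2 - 2 * A * (y i * bpsk n 1 c i) := by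
    intro i
    have h := bpsk_one_sq n c i
    rw [Pi.sub_apply, bpsk_eq]
    linear_combination A ^ 2 * h
  simp only [this, corr, Finset.sum_sub_distrib, Finset.sum_add_distrib, Finset.mul_sum]
  simp

lemma eucNorm_le_iff (n : ℕ) (A : ℝ) (hA : 0 < A) (y : Fin n → ℝ) (c c' : Fin n → ZMod 2) :
    eucNorm (y - bpsk n A c) ≤ eucNorm (y - bpsk n A c') ↔ corr y c' ≤ corr y c := by
  unfold eucNorm
  rw [Real.sqrt_le_sqrt_iff (Finset.sum_nonneg fun i _ => sq_nonneg _), dist_sq, dist_sq]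
  have : (0 : ℝ) < 2 * A := by linarith
  constructor
  · intro h
    exact le_of_mul_le_mul_left (by linarith) this
  · intro h
    have := mul_le_mul_of_nonneg_left h this.le
    linarith

lemma listRank_eq (n : ℕ) (Ch Cl : Submodule (ZMod 2) (Fin n → ZMod 2)) (A : ℝ) (hA : 0 < A)
    (y : Fin n → ℝ) :
    listRank n Ch Cl A y = Set.ncard {c | c ∈ Ch ∧ ∀ c' ∈ Cl, corr y c' ≤ corr y c} := by
  unfold listRank
  congr 1
  ext c
  simp only [Set.mem_ofPred_eq, SetLike.mem_coe]
  refine and_congr_right fun _ => ?_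
  have hb : BddBelow ((fun c' => eucNorm (y - bpsk n A c')) '' (Cl : Set (Fin n → ZMod 2))) := by
    refine ⟨0, ?_⟩
    rintro _ ⟨c', _, rfl⟩
    exact Real.sqrt_nonneg _
  have hne : ((fun c' => eucNorm (y - bpsk n A c')) '' (Cl : Set (Fin n → ZMod 2))).Nonempty :=
    ⟨_, ⟨0, Cl.zero_mem, rfl⟩⟩
  rw [le_csInf_iff hb hne]
  simp only [Set.forall_mem_image, SetLike.mem_coe, eucNorm_le_iff n A hA]

open Classical in
lemma measurable_rank (n : ℕ) (Ch Cl : Submodule (ZMod 2) (Fin n → ZMod 2)) :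
    Measurable fun y : Fin n → ℝ =>
      (Set.ncard {c | c ∈ Ch ∧ ∀ c' ∈ Cl, corr y c' ≤ corr y c} : ℝ) := by
  have h : ∀ y : Fin n → ℝ,
      (Set.ncard {c | c ∈ Ch ∧ ∀ c' ∈ Cl, corr y c' ≤ corr y c} : ℝ) =
      ∑ c : Fin n → ZMod 2, if (c ∈ Ch ∧ ∀ c' ∈ Cl, corr y c' ≤ corr y c) then (1 : ℝ) else 0 := by
    intro y
    rw [Finset.sum_boole, Set.ncard_eq_toFinset_card']
    simp
  simp only [h]
  have hc : ∀ c : Fin n → ZMod 2, Measurable fun y : Fin n → ℝ => corr y c := by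
    intro c
    unfold corr
    fun_prop
  refine Finset.measurable_sum _ fun c _ => Measurable.ite ?_ measurable_const measurable_const
  simp only [Set.ofPred_and, Set.ofPred_forall]
  refine MeasurableSet.inter (MeasurableSet.const _) ?_
  exact MeasurableSet.iInter fun c' => MeasurableSet.iInter fun _ =>
    measurableSet_le (hc c') (hc c)

instance (n : ℕ) : IsProbabilityMeasure (gaussPi n) := by
  unfold gaussPi; infer_instance

lemma hyperplane_null (n : ℕ) (d : Fin n → ℝ) (i : Fin n) (hi : d i ≠ 0) :
    ∀ᵐ z ∂(gaussPi n), ∑ j, z j * d j ≠ 0 := by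
  obtain _ | n := n
  · exact i.elim0
  have hmp := measurePreserving_piFinSuccAbove (fun _ : Fin (n + 1) => gaussianReal 0 1) i
  have hs : MeasurableSet {p : ℝ × (Fin n → ℝ) |
      p.1 * d i + ∑ j, p.2 j * d (i.succAbove j) = 0} :=
    measurableSet_eq_fun (by fun_prop) (by fun_prop)
  have h0 : ((gaussianReal 0 1).prod (Measure.pi fun _ : Fin n => gaussianReal 0 1))
      {p : ℝ × (Fin n → ℝ) | p.1 * d i + ∑ j, p.2 j * d (i.succAbove j) = 0} = 0 := by
    rw [Measure.prod_apply_symm hs, lintegral_eq_zero_iff' ]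
    · refine Filter.Eventually.of_forall fun w => ?_
      have : NullSingletonClass (gaussianReal 0 1) := nullSingletonClass_gaussianReal one_ne_zero
      refine Set.Subsingleton.measure_zero ?_ _
      intro a ha b hb
      simp only [Set.mem_preimage, Set.mem_ofPred_eq] at ha hb
      exact mul_right_cancel₀ hi (by linarith)
    · exact (measurable_measure_prodMk_right hs).aemeasurable
  have h1 := hmp.measure_preimage hs.nullMeasurableSet
  rw [h0] at h1
  rw [ae_iff]
  refine measure_mono_null ?_ h1
  intro z hz
  simp only [Set.mem_ofPred_eq, not_not] at hz
  rw [Fin.sum_univ_succAbove _ i] at hz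
  exact hz

lemma ae_ne (n : ℕ) :
    ∀ᵐ z ∂(gaussPi n), ∀ c c' : Fin n → ZMod 2, c ≠ c' → corr z c ≠ corr z c' := by
  rw [ae_all_iff]; intro c
  rw [ae_all_iff]; intro c'
  by_cases h : c = c'
  · simp [h]
  obtain ⟨i, hi⟩ : ∃ i, bpsk n 1 c i ≠ bpsk n 1 c' i := by
    by_contra! h2
    exact h (bpsk_one_inj n c c' h2)
  filter_upwards [hyperplane_null n (fun j => bpsk n 1 c j - bpsk n 1 c' j) i
    (sub_ne_zero.2 hi)] with z hz _ heq
  apply hz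
  simp only [mul_sub, Finset.sum_sub_distrib]
  exact sub_eq_zero.2 heq

lemma tendsto_corr (n : ℕ) (cbar c : Fin n → ZMod 2) (z : Fin n → ℝ) :
    Tendsto (fun A : ℝ => corr (bpsk n A cbar + z) c) (𝓝[>] 0) (𝓝 (corr z c)) := by
  have hc : Continuous (fun A : ℝ => corr (bpsk n A cbar + z) c) := by
    unfold corr
    simp only [Pi.add_apply, bpsk]
    fun_prop
  have := (hc.tendsto 0).mono_left (nhdsWithin_le_nhds (s := Set.Ioi 0))
  have h0 : bpsk n 0 cbar + z = z := by
    funext i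
    simp [bpsk]
  rwa [h0] at this

theorem stmt12 (k m n : ℕ) (hk : 1 ≤ k) (hm : 1 ≤ m) (hn : k + m ≤ n)
    (Ch Cl : Submodule (ZMod 2) (Fin n → ZMod 2)) (hsub : Cl ≤ Ch)
    (hChcard : Nat.card Ch = 2 ^ (k + m)) (hClcard : Nat.card Cl = 2 ^ k)
    -- the transmitted codeword
    (cbar : Fin n → ZMod 2) (hcbar : cbar ∈ Cl) :
    Tendsto
      (fun A : ℝ =>
        ∫ z, (listRank n ↑Ch ↑Cl A (bpsk n A cbar + z) : ℝ) ∂(gaussPi n))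
      (𝓝[>] (0 : ℝ))
      (𝓝 (∫ z, (listRank n ↑Ch ↑Cl 1 z : ℝ) ∂(gaussPi n))) ∧
    ∀ A : ℝ, 0 < A →
      ∫ z, (listRank n ↑Ch ↑Cl A z : ℝ) ∂(gaussPi n) =
        ∫ z, (listRank n ↑Ch ↑Cl 1 z : ℝ) ∂(gaussPi n) := by
  refine ⟨?_, ?_⟩
  · refine tendsto_integral_filter_of_dominated_convergence
      (fun _ => (Nat.card (Fin n → ZMod 2) : ℝ)) ?_ ?_ (integrable_const _) ?_
    · filter_upwards [self_mem_nhdsWithin] with A hA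
      simp only [listRank_eq n Ch Cl A hA]
      exact ((measurable_rank n Ch Cl).comp (measurable_const.add measurable_id)).aestronglyMeasurable
    · refine Filter.Eventually.of_forall fun A => Filter.Eventually.of_forall fun z => ?_
      rw [Real.norm_natCast]
      exact_mod_cast Set.ncard_le_card _
    · filter_upwards [ae_ne n] with z hz
      have hev : ∀ᶠ A in 𝓝[>] (0 : ℝ), ∀ c c' : Fin n → ZMod 2,
          (corr (bpsk n A cbar + z) c' ≤ corr (bpsk n A cbar + z) c ↔ corr z c' ≤ corr z c) := by
        rw [eventually_all]; intro c
        rw [eventually_all]; intro c'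
        rcases eq_or_ne c c' with rfl | hne
        · simp
        rcases lt_or_gt_of_ne (hz c c' hne) with h | h
        · filter_upwards [(tendsto_corr n cbar c z).eventually_lt (tendsto_corr n cbar c' z) h]
            with A hA
          exact iff_of_false hA.not_ge h.not_ge
        · filter_upwards [(tendsto_corr n cbar c' z).eventually_lt (tendsto_corr n cbar c z) h]
            with A hA
          exact iff_of_true hA.le h.le
      refine tendsto_const_nhds.congr' ?_
      filter_upwards [hev, self_mem_nhdsWithin] with A hA hpos
      rw [listRank_eq n Ch Cl A hpos, listRank_eq n Ch Cl 1 one_pos]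
      simp only [hA]
  · intro A hA
    simp only [listRank_eq n Ch Cl A hA, listRank_eq n Ch Cl 1 one_pos]
end
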